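/- arXiv:1909.00355 — 5 statements merged into one kernel-verified Lean document; each statement's English description precedes it below -/
import Mathlib

section
/- There exists a constant C > 0 such that for every real number σ > 0, ∫₀^π |cos θ − cos(θ/2)| / √(4σ² + 4 sin²(θ/2)) dθ ≤ C. -/
open Real

/-!
With `c = cos (θ/2)` and `s = sin (θ/2)`, both in `[0, 1]` on the interval of integration,
`cos θ - cos (θ/2) = 2c² - 1 - c = -(2c + 1)(1 - c)`, whose absolute value is at most
`3(1 - c) ≤ 3(1 - c²) = 3s² ≤ 3s`. The denominator is at least `2s`, so the integrand is bounded
by `3/2` uniformly in `σ`, and the integral by `3π/2`.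
-/

/-- There is a constant `C > 0` such that for every `σ > 0`,
`∫₀^π |cos θ − cos(θ/2)| / √(4σ² + 4 sin²(θ/2)) dθ ≤ C`. -/
theorem integral_abs_cos_diff_uniform_bound :
    ∃ C : ℝ, 0 < C ∧ ∀ σ : ℝ, 0 < σ →
      (∫ θ in (0:ℝ)..π,
          |Real.cos θ - Real.cos (θ / 2)| /
            Real.sqrt (4 * σ ^ 2 + 4 * Real.sin (θ / 2) ^ 2)) ≤ C := by
  refine ⟨3 / 2 * |π - 0|, by simp [Real.pi_ne_zero], fun σ hσ => ?_⟩
  refine (Real.le_norm_self _).trans (intervalIntegral.norm_integral_le_of_norm_le_const ?_)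
  intro θ hθ
  rw [Set.uIoc_of_le Real.pi_pos.le] at hθ
  obtain ⟨h0, hπ⟩ := hθ
  have hs : 0 ≤ Real.sin (θ / 2) :=
    Real.sin_nonneg_of_nonneg_of_le_pi (by linarith) (by linarith)
  have hc : 0 ≤ Real.cos (θ / 2) :=
    Real.cos_nonneg_of_neg_pi_div_two_le_of_le (by linarith) (by linarith)
  have hs1 := Real.sin_le_one (θ / 2)
  have hc1 := Real.cos_le_one (θ / 2)
  have hsc := Real.sin_sq_add_cos_sq (θ / 2)
  have hdouble : Real.cos θ = 2 * Real.cos (θ / 2) ^ 2 - 1 := by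
    rw [← Real.cos_two_mul]; congr 1; ring
  have hD : 0 < Real.sqrt (4 * σ ^ 2 + 4 * Real.sin (θ / 2) ^ 2) := by positivity
  have hDs : 2 * Real.sin (θ / 2) ≤ Real.sqrt (4 * σ ^ 2 + 4 * Real.sin (θ / 2) ^ 2) :=
    Real.le_sqrt_of_sq_le (by nlinarith [sq_nonneg σ])
  have hnum : |Real.cos θ - Real.cos (θ / 2)| ≤ 3 * Real.sin (θ / 2) := by
    rw [hdouble, abs_le]
    constructor <;> nlinarith [mul_nonneg hc (sub_nonneg.2 hc1), mul_nonneg hs (sub_nonneg.2 hs1)]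
  rw [Real.norm_eq_abs, abs_of_nonneg (by positivity), div_le_iff₀ hD]
  linarith
end

section
/- For every σ > 0 one has ∫₀^π cos θ / √(4σ² + 4 sin²(θ/2)) dθ > 0. Consequently, G(r,z,r',z') > 0 for all (r,z), (r',z') ∈ Π with (r,z) ≠ (r',z'). -/
/-! Both integrals have the form `∫ cos θ / √(a - b cos θ) dθ` with `0 < b < a`, over an interval on
which `cos` has mean zero. Subtracting the constant `1 / √a` from the weight `1 / √(a - b cos θ)`
therefore leaves the integral unchanged. The weight exceeds `1 / √a` exactly where `cos θ > 0`,
so the new integrand `cos θ * (1 / √(a - b cos θ) - 1 / √a)` is nonnegative; it is continuous and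
positive at `θ = 0`, hence its integral is positive. -/

open Real

/-- The kernel
`G(r,z,r',z') = (r r'/(4π)) ∫_{−π}^{π} cos θ · [(z−z')² + r² + r'² − 2 r r' cos θ]^{−1/2} dθ`. -/
noncomputable def Gker (r z r' z' : ℝ) : ℝ :=
  (r * r' / (4 * π)) *
    ∫ θ in (-π)..π,
      Real.cos θ / Real.sqrt ((z - z') ^ 2 + r ^ 2 + r' ^ 2 - 2 * r * r' * Real.cos θ)

/-- The weight `1 / √(a - b c)` is increasing in `c`, so its deviation from the value at `c = 0`
has the sign of `c`. -/
lemma mul_weight_sub_nonneg {a b c : ℝ} (ha : 0 < a) (hb : 0 ≤ b) (hc : 0 < a - b * c) :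
    0 ≤ c * (1 / √(a - b * c) - 1 / √a) := by
  rcases le_total 0 c with h | h
  · refine mul_nonneg h (sub_nonneg.2 ?_)
    have : 0 < √(a - b * c) := Real.sqrt_pos.2 hc
    gcongr
    nlinarith [mul_nonneg hb h]
  · refine mul_nonneg_of_nonpos_of_nonpos h (sub_nonpos.2 ?_)
    have : 0 < √a := Real.sqrt_pos.2 ha
    gcongr
    nlinarith [mul_nonneg hb (neg_nonneg.2 h)]

lemma integral_cos_div_sqrt_pos {a b u v : ℝ} (hb : 0 < b) (hab : b < a) (huv : u < v)
    (hu : u ≤ 0) (hv : 0 ≤ v) (hsin : Real.sin u = Real.sin v) :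
    0 < ∫ θ in u..v, Real.cos θ / √(a - b * Real.cos θ) := by
  have ha : 0 < a := hb.trans hab
  have hpos : ∀ θ : ℝ, 0 < a - b * Real.cos θ := fun θ => by
    nlinarith [Real.cos_le_one θ]
  have hne : ∀ θ : ℝ, √(a - b * Real.cos θ) ≠ 0 := fun θ => (Real.sqrt_pos.2 (hpos θ)).ne'
  have hcont : Continuous fun θ : ℝ => Real.cos θ / √(a - b * Real.cos θ) :=
    Continuous.div (by fun_prop) (by fun_prop) hne
  have hcont2 : Continuous fun θ : ℝ => Real.cos θ * (1 / √a) := by fun_prop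
  have hmean : ∫ θ in u..v, Real.cos θ * (1 / √a) = 0 := by
    rw [intervalIntegral.integral_mul_const, integral_cos, hsin, sub_self, zero_mul]
  have heq : ∫ θ in u..v, Real.cos θ / √(a - b * Real.cos θ) =
      ∫ θ in u..v, Real.cos θ * (1 / √(a - b * Real.cos θ) - 1 / √a) := by
    rw [← sub_zero (∫ θ in u..v, Real.cos θ / √(a - b * Real.cos θ)), ← hmean,
      ← intervalIntegral.integral_sub (hcont.intervalIntegrable _ _)
        (hcont2.intervalIntegrable _ _)]
    congr 1
    ext θ
    ring
  rw [heq]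
  refine intervalIntegral.integral_pos huv ?_ ?_ ⟨0, ⟨hu, hv⟩, ?_⟩
  · refine Continuous.continuousOn ((hcont.sub hcont2).congr fun θ => ?_)
    simp only [Pi.sub_apply]
    ring
  · exact fun θ _ => mul_weight_sub_nonneg ha hb.le (hpos θ)
  · have h0 : 0 < a - b := sub_pos.2 hab
    have hlt : √(a - b) < √a := Real.sqrt_lt_sqrt h0.le (by linarith)
    have := one_div_lt_one_div_of_lt (Real.sqrt_pos.2 h0) hlt
    simpa using this

/-- For every `σ > 0`, `∫₀^π cos θ / √(4σ² + 4 sin²(θ/2)) dθ > 0`; consequently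
`G(r,z,r',z') > 0` for all distinct points of the half-plane `Π`. -/
theorem integral_pos_and_Gker_pos :
    (∀ σ : ℝ, 0 < σ →
      0 < ∫ θ in (0:ℝ)..π,
            Real.cos θ / Real.sqrt (4 * σ ^ 2 + 4 * Real.sin (θ / 2) ^ 2)) ∧
    (∀ r z r' z' : ℝ, 0 < r → 0 < r' → (r, z) ≠ (r', z') → 0 < Gker r z r' z') := by
  refine ⟨fun σ hσ => ?_, fun r z r' z' hr hr' hne => ?_⟩
  · have h := integral_cos_div_sqrt_pos (a := 4 * σ ^ 2 + 2) (b := 2) two_pos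
      (by nlinarith [pow_pos hσ 2]) Real.pi_pos le_rfl Real.pi_pos.le (by simp)
    have heq : ∀ θ : ℝ, 4 * σ ^ 2 + 4 * Real.sin (θ / 2) ^ 2 =
        4 * σ ^ 2 + 2 - 2 * Real.cos θ := fun θ => by
      rw [Real.sin_sq_eq_half_sub, mul_div_cancel₀ θ two_ne_zero]
      ring
    simpa only [heq] using h
  · have hab : 2 * r * r' < (z - z') ^ 2 + r ^ 2 + r' ^ 2 := by
      by_cases hz : z = z'
      · have hrr : r - r' ≠ 0 := fun h => hne (by rw [sub_eq_zero.1 h, hz])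
        nlinarith [pow_pos (abs_pos.2 hrr) 2, sq_abs (r - r'), sq_nonneg (z - z')]
      · have hzz : z - z' ≠ 0 := sub_ne_zero.2 hz
        nlinarith [pow_pos (abs_pos.2 hzz) 2, sq_abs (z - z'), sq_nonneg (r - r')]
    have h := integral_cos_div_sqrt_pos (by positivity) hab
      (by linarith [Real.pi_pos] : -π < π) (by linarith [Real.pi_pos]) Real.pi_pos.le (by simp)
    exact mul_pos (by positivity) h
end

section
/- For all (r,z), (r',z') ∈ Π with (r,z) ≠ (r',z'), one has G(r,z,r',z') ≤ (√(r r')/(2π)) · arsinh(1/σ), where σ = √((r−r')² + (z−z')²) / (2√(r r')) and arsinh(x) = log(x + √(x² + 1)). -/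
/-!
With `σ = sigmaOf r z r' z'`, the radicand in `Gker` equals `4 r r' (σ² + sin² (θ/2))`
(`radicand_eq`). For `θ ∈ [-π, π]` one has `cos θ ≤ cos (θ/2)`, so the integrand is bounded
pointwise by `cos (θ/2) / (2 √(r r') √(σ² + sin² (θ/2)))`. This majorant has the antiderivative
`arsinh (sin (θ/2) / σ) / √(r r')`, and evaluating it at `±π` gives the bound.
-/

open Real

/-- `σ = √((r−r')² + (z−z')²) / (2√(r r'))`. -/
noncomputable def sigmaOf (r z r' z' : ℝ) : ℝ :=
  Real.sqrt ((r - r') ^ 2 + (z - z') ^ 2) / (2 * Real.sqrt (r * r'))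

theorem cos_le_cos_half {θ : ℝ} (h : θ ∈ Set.Icc (-π) π) : cos θ ≤ cos (θ / 2) := by
  have h0 : 0 ≤ cos (θ / 2) :=
    cos_nonneg_of_mem_Icc ⟨by linarith [h.1], by linarith [h.2]⟩
  have h1 := cos_le_one (θ / 2)
  have h2 : cos θ = 2 * cos (θ / 2) ^ 2 - 1 := by
    rw [← cos_two_mul]; congr 1; ring
  nlinarith

theorem sigmaOf_pos {r z r' z' : ℝ} (hr : 0 < r) (hr' : 0 < r')
    (hne : (r, z) ≠ (r', z')) : 0 < sigmaOf r z r' z' := by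
  have hd : 0 < (r - r') ^ 2 + (z - z') ^ 2 := by
    by_cases h : r = r'
    · have hz : z - z' ≠ 0 := fun hz => hne (by rw [h, sub_eq_zero.mp hz])
      positivity
    · have := sub_ne_zero.mpr h
      positivity
  unfold sigmaOf
  positivity

theorem radicand_eq {r r' : ℝ} (z z' θ : ℝ) (hr : 0 < r) (hr' : 0 < r') :
    (z - z') ^ 2 + r ^ 2 + r' ^ 2 - 2 * r * r' * cos θ =
      (2 * √(r * r')) ^ 2 * (sigmaOf r z r' z' ^ 2 + sin (θ / 2) ^ 2) := by
  have hp : 0 < r * r' := mul_pos hr hr'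
  have hc : cos θ = 1 - 2 * sin (θ / 2) ^ 2 := by
    have h := cos_two_mul (θ / 2)
    rw [mul_div_cancel₀ θ two_ne_zero] at h
    linarith [sin_sq_add_cos_sq (θ / 2)]
  have hs : (2 * √(r * r')) ^ 2 * sigmaOf r z r' z' ^ 2 = (r - r') ^ 2 + (z - z') ^ 2 := by
    unfold sigmaOf
    rw [← mul_pow, mul_div_cancel₀ _ (by positivity), sq_sqrt (by positivity)]
  rw [mul_add, hs, mul_pow, sq_sqrt hp.le, hc]
  ring

/-- An antiderivative of the majorant, obtained from the substitution `u = sin (θ/2) / s`. -/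
theorem hasDerivAt_arsinh_sin_half {s : ℝ} (hs : 0 < s) (θ : ℝ) :
    HasDerivAt (fun t => 2 * arsinh (sin (t / 2) / s))
      (cos (θ / 2) / √(s ^ 2 + sin (θ / 2) ^ 2)) θ := by
  have h := ((((hasDerivAt_id θ).div_const 2).sin.div_const s).arsinh).const_mul 2
  have h1 : √(1 + (sin (θ / 2) / s) ^ 2) = √(s ^ 2 + sin (θ / 2) ^ 2) / s := by
    rw [eq_div_iff hs.ne', ← sqrt_sq hs.le, ← sqrt_mul (by positivity), sqrt_sq hs.le]
    congr 1
    field_simp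
  have h2 : 0 < √(s ^ 2 + sin (θ / 2) ^ 2) := by positivity
  refine h.congr_deriv ?_
  simp only [id, smul_eq_mul]
  rw [h1]
  field_simp

theorem integral_majorant {s : ℝ} (hs : 0 < s) :
    ∫ θ in (-π)..π, cos (θ / 2) / √(s ^ 2 + sin (θ / 2) ^ 2) = 4 * arsinh (1 / s) := by
  rw [intervalIntegral.integral_eq_sub_of_hasDerivAt
    (fun θ _ => hasDerivAt_arsinh_sin_half hs θ)]
  · rw [neg_div, sin_neg, sin_pi_div_two, neg_div, arsinh_neg]
    ring
  · apply Continuous.intervalIntegrable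
    refine Continuous.div (by fun_prop) (by fun_prop) fun θ => ?_
    positivity

/-- For all distinct points `(r,z), (r',z')` of the half-plane,
`G(r,z,r',z') ≤ (√(r r')/(2π)) · arsinh(1/σ)`. -/
theorem Gker_le_arsinh (r z r' z' : ℝ) (hr : 0 < r) (hr' : 0 < r')
    (hne : (r, z) ≠ (r', z')) :
    Gker r z r' z' ≤
      (Real.sqrt (r * r') / (2 * π)) * Real.arsinh (1 / sigmaOf r z r' z') := by
  have hs := sigmaOf_pos hr hr' hne
  have hp : 0 < r * r' := mul_pos hr hr'
  unfold Gker
  set s := sigmaOf r z r' z' with hs_def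
  have hq : 0 < √(r * r') := sqrt_pos.mpr hp
  have hform : ∀ θ : ℝ, √((z - z') ^ 2 + r ^ 2 + r' ^ 2 - 2 * r * r' * cos θ) =
      2 * √(r * r') * √(s ^ 2 + sin (θ / 2) ^ 2) := fun θ => by
    rw [radicand_eq z z' θ hr hr', sqrt_mul (by positivity), sqrt_sq (by positivity)]
  have hmono : ∫ θ in (-π)..π, cos θ / (2 * √(r * r') * √(s ^ 2 + sin (θ / 2) ^ 2)) ≤
      ∫ θ in (-π)..π, (2 * √(r * r'))⁻¹ * (cos (θ / 2) / √(s ^ 2 + sin (θ / 2) ^ 2)) := by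
    apply intervalIntegral.integral_mono_on (by linarith [pi_pos])
    · apply Continuous.intervalIntegrable
      refine Continuous.div (by fun_prop) (by fun_prop) fun θ => ?_
      positivity
    · apply Continuous.intervalIntegrable
      refine continuous_const.mul (Continuous.div (by fun_prop) (by fun_prop) fun θ => ?_)
      positivity
    · intro θ hθ
      rw [inv_mul_eq_div, div_div, mul_comm (√(s ^ 2 + sin (θ / 2) ^ 2))]
      gcongr
      exact cos_le_cos_half hθ
  rw [intervalIntegral.integral_const_mul, integral_majorant hs] at hmono
  simp only [hform]
  calc _ ≤ r * r' / (4 * π) * ((2 * √(r * r'))⁻¹ * (4 * arsinh (1 / s))) := by gcongr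
    _ = √(r * r') / (2 * π) * arsinh (1 / s) := by
      nth_rewrite 1 [← mul_self_sqrt hp.le]
      field_simp
end

section
/- Let β > 0, Λ > 0, d > 0 and let ζ : ℝ² → ℝ be measurable with 0 ≤ ζ ≤ Λ/β² almost everywhere. Suppose S ⊆ ℝ² is a measurable set with ζ = 0 almost everywhere outside S, that S ⊆ {(r,z) : 0 < r ≤ d}, and that ∫ ζ(r,z) · r dr dz = 1 (integral over ℝ² with respect to planar Lebesgue measure). Then the diameter of S satisfies diam(S) ≥ β / √(π Λ d). -/
/-!
A set of diameter `D` lies in the closed disc of radius `D` around any of its points, so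
`m₂(S) ≤ π D²`. On `S` the integrand `ζ r` is at most `(Λ / β²) d`, and it vanishes almost
everywhere off `S`, hence `1 ≤ (Λ / β²) d π D²`. This crude comparison is enough: the isodiametric
inequality would give the bound with an additional factor `2`.
-/

open Real MeasureTheory

lemma volume_real_le_pi_mul_diam_sq (S : Set (EuclideanSpace ℝ (Fin 2)))
    (hb : Bornology.IsBounded S) : volume.real S ≤ π * Metric.diam S ^ 2 := by
  rcases S.eq_empty_or_nonempty with rfl | ⟨x, hx⟩
  · simp
  have hsub : S ⊆ Metric.closedBall x (Metric.diam S) := fun y hy =>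
    Metric.dist_le_diam_of_mem hb hy hx
  have hball : volume.real (Metric.closedBall x (Metric.diam S)) = π * Metric.diam S ^ 2 := by
    rw [measureReal_def, EuclideanSpace.volume_closedBall_fin_two]
    simp [ENNReal.toReal_ofReal Metric.diam_nonneg, mul_comm, pi_pos.le]
  rw [← hball]
  exact measureReal_mono hsub (measure_closedBall_lt_top.ne)

/-- Lower bound on the diameter of the (essential) support: if `0 ≤ ζ ≤ Λ/β²` a.e.,
`ζ` vanishes a.e. outside a measurable set `S` contained in the strip `{0 < r ≤ d}`,
and `∫ ζ(r,z) r dr dz = 1`, then `diam(S) ≥ β / √(π Λ d)`. -/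
theorem diam_support_lower_bound (β Λ d : ℝ) (hβ : 0 < β) (hΛ : 0 < Λ) (hd : 0 < d)
    (ζ : EuclideanSpace ℝ (Fin 2) → ℝ) (hmeas : Measurable ζ)
    (hbound : ∀ᵐ x ∂volume, 0 ≤ ζ x ∧ ζ x ≤ Λ / β ^ 2)
    (S : Set (EuclideanSpace ℝ (Fin 2))) (hS : MeasurableSet S)
    (hsupp : ∀ᵐ x ∂volume, x ∉ S → ζ x = 0)
    (hstrip : S ⊆ {x : EuclideanSpace ℝ (Fin 2) | 0 < x 0 ∧ x 0 ≤ d})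
    (hmass : ∫ x, ζ x * x 0 = 1) :
    ENNReal.ofReal (β / Real.sqrt (π * Λ * d)) ≤ EMetric.diam S := by
  change _ ≤ Metric.ediam S
  by_cases htop : Metric.ediam S = ⊤
  · simp [htop]
  have hb : Bornology.IsBounded S := Metric.isBounded_iff_ediam_ne_top.2 htop
  rw [ENNReal.ofReal_le_iff_le_toReal htop]
  change _ ≤ Metric.diam S
  have hvol := volume_real_le_pi_mul_diam_sq S hb
  have hset : ∫ x in S, ζ x * x 0 = 1 := by
    rw [← hmass]
    refine setIntegral_eq_integral_of_ae_compl_eq_zero ?_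
    filter_upwards [hsupp] with x hx hxS
    simp [hx hxS]
  have hint : ‖∫ x in S, ζ x * x 0‖ ≤ Λ / β ^ 2 * d * volume.real S := by
    refine norm_setIntegral_le_of_norm_le_const_ae' hb.measure_lt_top ?_
    filter_upwards [hbound] with x hx hxS
    obtain ⟨h1, h2⟩ := hstrip hxS
    rw [Real.norm_eq_abs, abs_of_nonneg (mul_nonneg hx.1 h1.le)]
    exact mul_le_mul hx.2 h2 h1.le (by positivity)
  rw [hset, norm_one] at hint
  have hD : (0 : ℝ) ≤ Metric.diam S := Metric.diam_nonneg
  have hfin : 1 ≤ Λ / β ^ 2 * d * (π * Metric.diam S ^ 2) :=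
    hint.trans (mul_le_mul_of_nonneg_left hvol (by positivity))
  have hsq : β ^ 2 ≤ Metric.diam S ^ 2 * (π * Λ * d) := by
    have h : Λ / β ^ 2 * d * (π * Metric.diam S ^ 2)
        = Metric.diam S ^ 2 * (π * Λ * d) / β ^ 2 := by ring
    rwa [h, one_le_div (by positivity)] at hfin
  have hP : 0 < π * Λ * d := by positivity
  rw [div_le_iff₀ (Real.sqrt_pos.2 hP)]
  refine le_of_sq_le_sq ?_ (by positivity)
  rwa [mul_pow, Real.sq_sqrt hP.le]
end

section
/- Let M > 0 and κ > 0 with κ ≤ πM, and let ζ : ℝ² → ℝ be measurable with 0 ≤ ζ ≤ M almost everywhere and ∫_{ℝ²} ζ dm₂ = κ. Then for every x ∈ ℝ², ∫_{ℝ²} max(log(1/|x − y|), 0) · ζ(y) dm₂(y) ≤ (κ/2) ( log(πM/κ) + 1 ). -/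
/-!
Write `c = log (1 / ρ) = log (πM / κ) / 2`, which is nonnegative because `κ ≤ πM`, and
`g y = max (log (1 / |x - y|)) 0`. Splitting at level `c`, the bounds `0 ≤ ζ ≤ M` give the pointwise
inequality `g ζ ≤ c ζ + M max (log (1 / |x - y|) - c) 0`. Integrating, the first term contributes
`c κ`; the second is a radial function supported in the disc of radius `ρ = exp (-c)`, and polar
coordinates give it the integral `M π ρ² / 2 = κ / 2` (`integral_truncLog_plane`).
-/

open Real MeasureTheory

/-- On the disc of radius `exp (-c)` the radial density `r * max (log (1 / r) - c) 0` has the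
antiderivative `r² / 4 - r² log r / 2 - c r² / 2`, which extends continuously by `0` to `r = 0`. -/
lemma integral_truncLog_radial (c : ℝ) :
    IntegrableOn (fun r : ℝ => r * max (Real.log (1 / r) - c) 0) (Set.Ioi 0) ∧
      ∫ r in Set.Ioi (0 : ℝ), r * max (Real.log (1 / r) - c) 0 = Real.exp (-c) ^ 2 / 4 := by
  set ρ := Real.exp (-c) with hρ
  have hρ0 : 0 < ρ := Real.exp_pos _
  have hlog : Real.log ρ = -c := Real.log_exp _
  have hcont : Continuous fun r : ℝ => -(r * Real.log r) - c * r :=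
    Real.continuous_mul_log.neg.sub (by fun_prop)
  have hin : ∀ r ∈ Set.Ioc 0 ρ,
      r * max (Real.log (1 / r) - c) 0 = -(r * Real.log r) - c * r := by
    rintro r ⟨h0, h1⟩
    have := Real.log_le_log h0 h1
    rw [one_div, Real.log_inv, max_eq_left (by linarith)]
    ring
  have hout : ∀ r ∈ Set.Ioi (0 : ℝ) \ Set.Ioc 0 ρ, r * max (Real.log (1 / r) - c) 0 = 0 := by
    rintro r ⟨h0, h1⟩
    have h2 : ρ < r := by
      by_contra h
      exact h1 ⟨h0, not_lt.1 h⟩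
    have := Real.log_lt_log hρ0 h2
    rw [one_div, Real.log_inv, max_eq_right (by linarith), mul_zero]
  have hsub : Set.Ioc 0 ρ ⊆ Set.Ioi (0 : ℝ) := fun r hr => hr.1
  have hion : IntegrableOn (fun r : ℝ => r * max (Real.log (1 / r) - c) 0) (Set.Ioc 0 ρ) :=
    (hcont.integrableOn_Ioc).congr_fun (fun r hr => (hin r hr).symm) measurableSet_Ioc
  refine ⟨hion.of_forall_sdiff_eq_zero measurableSet_Ioi hout, ?_⟩
  rw [setIntegral_eq_of_subset_of_forall_sdiff_eq_zero measurableSet_Ioi hsub hout,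
    setIntegral_congr_fun measurableSet_Ioc hin, ← intervalIntegral.integral_of_le hρ0.le,
    intervalIntegral.integral_eq_sub_of_hasDerivAt_of_le
      (f := fun r => r ^ 2 / 4 - r * (r * Real.log r) / 2 - c * r ^ 2 / 2) hρ0.le]
  · simp only [hlog]
    ring
  · have := Real.continuous_mul_log
    exact Continuous.continuousOn (by fun_prop)
  · intro r hr
    have hr0 : r ≠ 0 := hr.1.ne'
    have h1 := ((hasDerivAt_pow 2 r).div_const 4).sub
      (((hasDerivAt_id r).mul (Real.hasDerivAt_mul_log hr0)).div_const 2)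
    have h2 := h1.sub (((hasDerivAt_pow 2 r).const_mul c).div_const 2)
    refine h2.congr_deriv ?_
    simp
    ring
  · exact hcont.intervalIntegrable _ _

lemma integral_truncLog_plane (c : ℝ) (x : EuclideanSpace ℝ (Fin 2)) :
    Integrable (fun y => max (Real.log (1 / dist x y) - c) 0) ∧
      ∫ y, max (Real.log (1 / dist x y) - c) 0 = π * Real.exp (-c) ^ 2 / 2 := by
  obtain ⟨h1, h2⟩ := integral_truncLog_radial c
  simp only [dist_eq_norm]
  constructor
  · refine Integrable.comp_sub_left
      (f := fun z : EuclideanSpace ℝ (Fin 2) => max (Real.log (1 / ‖z‖) - c) 0) ?_ x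
    rw [integrable_fun_norm_addHaar volume (f := fun r => max (Real.log (1 / r) - c) 0)]
    simpa using h1
  · rw [integral_sub_left_eq_self
      (fun z : EuclideanSpace ℝ (Fin 2) => max (Real.log (1 / ‖z‖) - c) 0) volume x,
      integral_fun_norm_addHaar volume (fun r => max (Real.log (1 / r) - c) 0)]
    have hv : volume.real (Metric.ball (0 : EuclideanSpace ℝ (Fin 2)) 1) = π := by
      simp [Measure.real, EuclideanSpace.volume_ball_fin_two, Real.pi_pos.le]
    simp only [finrank_euclideanSpace, Fintype.card_fin, hv, smul_eq_mul, Nat.add_one_sub_one,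
      pow_one, h2, nsmul_eq_mul]
    push_cast
    ring

/-- Bathtub-type bound: if `0 ≤ ζ ≤ M` a.e. on `ℝ²` and `∫ ζ = κ` with `0 < κ ≤ πM`, then
for every `x`, `∫ max(log(1/|x−y|), 0) ζ(y) dy ≤ (κ/2)(log(πM/κ) + 1)`. -/
theorem log_potential_bathtub_bound (M κ : ℝ) (hM : 0 < M) (hκ : 0 < κ)
    (hκM : κ ≤ π * M)
    (ζ : EuclideanSpace ℝ (Fin 2) → ℝ) (hmeas : Measurable ζ)
    (hbound : ∀ᵐ y ∂volume, 0 ≤ ζ y ∧ ζ y ≤ M)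
    (hmass : ∫ y, ζ y = κ) :
    ∀ x : EuclideanSpace ℝ (Fin 2),
      (∫ y, max (Real.log (1 / dist x y)) 0 * ζ y) ≤ (κ / 2) * (Real.log (π * M / κ) + 1) := by
  intro x
  -- The Bochner integral of a non-integrable function is `0`, whereas `∫ ζ = κ > 0`.
  have hζ : Integrable ζ := by
    by_contra h
    rw [integral_undef h] at hmass
    exact hκ.ne hmass
  set c := Real.log (π * M / κ) / 2 with hc
  have hc0 : 0 ≤ c := div_nonneg (Real.log_nonneg ((one_le_div hκ).2 hκM)) (by norm_num)
  have hexp : Real.exp (-c) ^ 2 = κ / (π * M) := by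
    have h2c : ((2 : ℕ) : ℝ) * -c = -Real.log (π * M / κ) := by
      rw [hc]
      push_cast
      ring
    rw [← Real.exp_nat_mul, h2c,
      Real.exp_neg, Real.exp_log (by positivity), inv_div]
  obtain ⟨hi, hval⟩ := integral_truncLog_plane c x
  calc (∫ y, max (Real.log (1 / dist x y)) 0 * ζ y)
      ≤ ∫ y, (c * ζ y + M * max (Real.log (1 / dist x y) - c) 0) := by
        refine integral_mono_of_nonneg ?_ ((hζ.const_mul c).add (hi.const_mul M)) ?_
        · filter_upwards [hbound] with y hy
          exact mul_nonneg (le_max_right _ _) hy.1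
        · filter_upwards [hbound] with y hy
          have h1 : max (Real.log (1 / dist x y)) 0
              ≤ c + max (Real.log (1 / dist x y) - c) 0 :=
            max_le (by linarith [le_max_left (Real.log (1 / dist x y) - c) 0])
              (add_nonneg hc0 (le_max_right _ _))
          have h2 := mul_le_mul_of_nonneg_right h1 hy.1
          have h3 := mul_le_mul_of_nonneg_left hy.2
            (le_max_right (Real.log (1 / dist x y) - c) 0)
          linarith
    _ = c * κ + M * (π * (κ / (π * M)) / 2) := by
        rw [integral_add (hζ.const_mul c) (hi.const_mul M), integral_const_mul,
          integral_const_mul, hmass, hval, hexp]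
    _ = (κ / 2) * (Real.log (π * M / κ) + 1) := by
        have := Real.pi_pos
        rw [hc]
        field_simp
end
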